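/- (Fractional discrete Sobolev inequality.) Let h>0 and 0<s<1/2. There is a constant C_s>0 depending only on s (independent of h) such that for every finitely supported u:ℤ→ℝ: (h·Σ_{j∈ℤ}|u_j|^{2/(1−2s)})^{(1−2s)/2} ≤ C_s·((h/2)·Σ_{j∈ℤ}Σ_{m∈ℤ, m≠j} |u_j−u_m|²·K_s^h(j−m))^{1/2}. -/

import Mathlib

/-- The kernel of the fractional discrete Laplacian on the mesh of size `h`. -/
noncomputable def Ksh (h s : ℝ) (m : ℤ) : ℝ :=
  if m = 0 then 0 else
    ((4 : ℝ) ^ s * Real.Gamma (1/2 + s) / (Real.sqrt Real.pi * (Real.Gamma (1 - s) / s))) *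
      (Real.Gamma (|(m : ℝ)| - s) / (h ^ (2 * s) * Real.Gamma (|(m : ℝ)| + 1 + s)))

/-- The unnormalised kernel. -/
noncomputable def rker (s : ℝ) (m : ℤ) : ℝ :=
  if m = 0 then 0 else Real.Gamma (|(m : ℝ)| - s) / Real.Gamma (|(m : ℝ)| + 1 + s)

lemma rker_nonneg (s : ℝ) (hs0 : 0 < s) (hs1 : s < 1/2) (m : ℤ) : 0 ≤ rker s m := by
  unfold rker
  split_ifs with hm
  · exact le_rfl
  · have h1 : (1 : ℝ) ≤ |(m : ℝ)| := by
      have := Int.one_le_abs hm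
      exact_mod_cast this
    have := Real.Gamma_pos_of_pos (show 0 < |(m : ℝ)| - s by linarith)
    have := Real.Gamma_pos_of_pos (show 0 < |(m : ℝ)| + 1 + s by linarith)
    positivity

lemma rker_neg (s : ℝ) (m : ℤ) : rker s (-m) = rker s m := by
  simp [rker]

lemma rker_summable (s : ℝ) (hs0 : 0 < s) (hs1 : s < 1/2) : Summable (rker s) := by
  have key : Summable (fun n : ℕ => rker s ((n : ℤ) + 1)) := by
    let g : ℕ → ℝ := fun n => Real.Gamma ((n : ℝ) + 1 - s) / Real.Gamma ((n : ℝ) + 1 + s)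
    have hg : ∀ n, 0 ≤ g n := by
      intro n
      have hn : (0 : ℝ) ≤ n := n.cast_nonneg
      have := Real.Gamma_pos_of_pos (show 0 < (n : ℝ) + 1 - s by linarith)
      have := Real.Gamma_pos_of_pos (show 0 < (n : ℝ) + 1 + s by linarith)
      positivity
    have htel : ∀ n : ℕ, rker s ((n : ℤ) + 1) = (g n - g (n + 1)) / (2 * s) := by
      intro n
      have hn : (0 : ℝ) ≤ n := n.cast_nonneg
      have h1 := Real.Gamma_pos_of_pos (show 0 < (n : ℝ) + 1 - s by linarith)
      have h2 := Real.Gamma_pos_of_pos (show 0 < (n : ℝ) + 1 + s by linarith)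
      have e1 := Real.Gamma_add_one (show (n : ℝ) + 1 - s ≠ 0 by linarith)
      have e2 := Real.Gamma_add_one (show (n : ℝ) + 1 + s ≠ 0 by linarith)
      have hne : (n : ℤ) + 1 ≠ 0 := by omega
      have habs : |(((n : ℤ) + 1 : ℤ) : ℝ)| = (n : ℝ) + 1 := by
        push_cast
        exact abs_of_nonneg (by linarith)
      simp only [rker, if_neg hne, habs, g]
      push_cast
      rw [show (n : ℝ) + 1 + 1 + s = (n : ℝ) + 1 + s + 1 by ring,
        show (n : ℝ) + 1 + 1 - s = (n : ℝ) + 1 - s + 1 by ring, e1, e2]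
      have : (n : ℝ) + 1 + s ≠ 0 := by linarith
      field_simp
      ring
    refine summable_of_sum_range_le (c := g 0 / (2 * s)) (fun n => rker_nonneg s hs0 hs1 _) ?_
    intro n
    simp_rw [htel]
    rw [← Finset.sum_div, Finset.sum_range_sub']
    have := hg n
    gcongr
    linarith
  have key2 : Summable (fun n : ℕ => rker s (n : ℤ)) := by
    rw [← summable_nat_add_iff 1]
    simpa using key
  refine Summable.of_nat_of_neg key2 ?_
  simpa [rker_neg] using key2

lemma rker_lower (s : ℝ) (hs0 : 0 < s) (hs1 : s < 1/2) (k : ℕ) (hk : 1 ≤ k) :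
    1 ≤ rker s (k : ℤ) * ((k : ℝ) + 1) ^ (1 + 2 * s) := by
  have hk1 : (1 : ℝ) ≤ k := by exact_mod_cast hk
  have hne : (k : ℤ) ≠ 0 := by omega
  have ha := Real.Gamma_pos_of_pos (show 0 < (k : ℝ) - s by linarith)
  have hb := Real.Gamma_pos_of_pos (show 0 < (k : ℝ) + 1 + s by linarith)
  have hc := Real.Gamma_pos_of_pos (show 0 < (k : ℝ) by linarith)
  have hd := Real.Gamma_pos_of_pos (show 0 < (k : ℝ) + 1 by linarith)
  have e0 := Real.Gamma_add_one (show (k : ℝ) ≠ 0 by linarith)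
  have e1 := Real.Gamma_add_one (show (k : ℝ) + 1 ≠ 0 by linarith)
  have e2 := Real.Gamma_add_one (show (k : ℝ) - s ≠ 0 by linarith)
  have c1 : Real.Gamma (k + 1 + s) ≤ Real.Gamma (k + 1) * (k + 1 : ℝ) ^ s := by
    have := Real.Gamma_mul_add_mul_le_rpow_Gamma_mul_rpow_Gamma
      (s := (k : ℝ) + 1) (t := (k : ℝ) + 1 + 1) (a := 1 - s) (b := s)
      (by linarith) (by linarith) (by linarith) hs0 (by ring)
    rw [show (1 - s) * ((k : ℝ) + 1) + s * ((k : ℝ) + 1 + 1) = k + 1 + s by ring, e1,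
      Real.mul_rpow (by linarith) hd.le, mul_comm ((k + 1 : ℝ) ^ s), ← mul_assoc,
      ← Real.rpow_add hd] at this
    simpa using this
  have c2 : Real.Gamma k ≤ Real.Gamma (k - s) * (k + 1 : ℝ) ^ s := by
    have := Real.Gamma_mul_add_mul_le_rpow_Gamma_mul_rpow_Gamma
      (s := (k : ℝ) - s) (t := (k : ℝ) - s + 1) (a := 1 - s) (b := s)
      (by linarith) (by linarith) (by linarith) hs0 (by ring)
    rw [show (1 - s) * ((k : ℝ) - s) + s * ((k : ℝ) - s + 1) = k by ring, e2,
      Real.mul_rpow (by linarith) ha.le, mul_comm (((k : ℝ) - s) ^ s), ← mul_assoc,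
      ← Real.rpow_add ha] at this
    simp only [sub_add_cancel, Real.rpow_one] at this
    refine this.trans ?_
    gcongr
    · linarith
    · linarith
  have hr : rker s (k : ℤ) = Real.Gamma (k - s) / Real.Gamma (k + 1 + s) := by
    simp [rker, hne]
    omega
  rw [hr, div_mul_eq_mul_div, le_div_iff₀ hb, one_mul]
  refine c1.trans ?_
  rw [e0]
  have hkp : (0 : ℝ) < k + 1 := by linarith
  rw [show 1 + 2 * s = 1 + s + s by ring, Real.rpow_add hkp, Real.rpow_add hkp, Real.rpow_one]
  have hX : 0 < (k + 1 : ℝ) ^ s := by positivity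
  calc (k : ℝ) * Real.Gamma k * (k + 1 : ℝ) ^ s
      ≤ (k + 1) * (Real.Gamma (k - s) * (k + 1 : ℝ) ^ s) * (k + 1 : ℝ) ^ s := by
        gcongr
        linarith
    _ = _ := by ring

lemma core (s : ℝ) (hs0 : 0 < s) (hs1 : s < 1/2) (p : ℝ) (hp : p = 2 / (1 - 2 * s))
    (a T D : ℝ) (v w : ℕ → ℝ) (ha : 0 < a) (haT : a ^ p ≤ T)
    (hw : ∀ k, 0 ≤ w k)
    (hwl : ∀ k : ℕ, 1 ≤ w k * ((k : ℝ) + 1 + 1) ^ (1 + 2 * s))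
    (hT : ∀ N, ∑ k ∈ Finset.range N, |v k| ^ p ≤ T)
    (hD : ∀ N, ∑ k ∈ Finset.range N, (a - |v k|) ^ 2 * w k ≤ D) :
    a ^ p ≤ (32 * (2 : ℝ) ^ ((p + 2) * (2 * s))) * T ^ (2 * s) * D := by
  have hp2 : 2 < p := by
    rw [hp, lt_div_iff₀ (by linarith)]; linarith
  have hap : 0 < a ^ p := by positivity
  have hT0 : 0 < T := by linarith
  have hD0 : 0 ≤ D := by simpa using hD 0
  have h2p : (1 : ℝ) ≤ 2 ^ p := Real.one_le_rpow (by norm_num) (by linarith)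
  set x : ℝ := 2 * 2 ^ p * T / a ^ p with hx
  have hx1 : 2 ≤ x := by
    rw [hx, le_div_iff₀ hap]
    nlinarith
  set N := ⌈x⌉₊ with hN
  have hNx : x ≤ N := Nat.le_ceil x
  have hNx2 : (N : ℝ) ≤ 2 * x := by
    have := Nat.ceil_lt_add_one (show 0 ≤ x by linarith)
    linarith
  have hN0 : (2 : ℝ) ≤ N := hx1.trans hNx
  have step : ∀ k, a ^ 2 ≤ 4 * (a - |v k|) ^ 2 + a ^ 2 * (2 ^ p / a ^ p) * |v k| ^ p := by
    intro k
    have hv := abs_nonneg (v k)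
    rcases le_total (|v k|) (a / 2) with h | h
    · have : 0 ≤ a ^ 2 * (2 ^ p / a ^ p) * |v k| ^ p := by positivity
      nlinarith
    · have h1 : (a / 2) ^ p ≤ |v k| ^ p := Real.rpow_le_rpow (by linarith) h (by linarith)
      rw [Real.div_rpow ha.le (by norm_num)] at h1
      have h2 : a ^ 2 * (2 ^ p / a ^ p) * (a ^ p / 2 ^ p) = a ^ 2 := by
        field_simp
      have h3 : a ^ 2 * (2 ^ p / a ^ p) * (a ^ p / 2 ^ p)
          ≤ a ^ 2 * (2 ^ p / a ^ p) * |v k| ^ p := by gcongr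
      nlinarith [sq_nonneg (a - |v k|)]
  have s1 : (N : ℝ) * a ^ 2 ≤ 4 * ∑ k ∈ Finset.range N, (a - |v k|) ^ 2
      + a ^ 2 * (2 ^ p / a ^ p) * ∑ k ∈ Finset.range N, |v k| ^ p := by
    have := Finset.sum_le_sum (s := Finset.range N) (fun k _ => step k)
    simpa [Finset.sum_add_distrib, ← Finset.mul_sum] using this
  have s2 : a ^ 2 * (2 ^ p / a ^ p) * ∑ k ∈ Finset.range N, |v k| ^ p ≤ N * a ^ 2 / 2 := by
    calc _ ≤ a ^ 2 * (2 ^ p / a ^ p) * T := by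
          gcongr
          exact hT N
      _ = a ^ 2 * x / 2 := by rw [hx]; field_simp
      _ ≤ a ^ 2 * N / 2 := by gcongr
      _ = _ := by ring
  have s3 : ∑ k ∈ Finset.range N, (a - |v k|) ^ 2 ≤ ((N : ℝ) + 1) ^ (1 + 2 * s) * D := by
    calc _ ≤ ∑ k ∈ Finset.range N, ((N : ℝ) + 1) ^ (1 + 2 * s) * ((a - |v k|) ^ 2 * w k) := by
          refine Finset.sum_le_sum fun k hk => ?_
          have hkN : (k : ℝ) + 1 ≤ N := by exact_mod_cast Finset.mem_range.mp hk
          have h1 : ((k : ℝ) + 1 + 1) ^ (1 + 2 * s) ≤ ((N : ℝ) + 1) ^ (1 + 2 * s) := by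
            gcongr
          have h2 : 1 ≤ w k * ((N : ℝ) + 1) ^ (1 + 2 * s) :=
            (hwl k).trans (mul_le_mul_of_nonneg_left h1 (hw k))
          have h3 := mul_le_mul_of_nonneg_left h2 (sq_nonneg (a - |v k|))
          linarith
      _ = ((N : ℝ) + 1) ^ (1 + 2 * s) * ∑ k ∈ Finset.range N, (a - |v k|) ^ 2 * w k := by
          rw [Finset.mul_sum]
      _ ≤ _ := by
          gcongr
          exact hD N
  have hNp : (0 : ℝ) < N := by linarith
  have s4 : ((N : ℝ) + 1) ^ (1 + 2 * s) ≤ 4 * N * (N : ℝ) ^ (2 * s) := by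
    calc ((N : ℝ) + 1) ^ (1 + 2 * s) ≤ (2 * (N : ℝ)) ^ (1 + 2 * s) := by
          gcongr
          linarith
      _ = 2 ^ (1 + 2 * s) * (N : ℝ) ^ (1 + 2 * s) := Real.mul_rpow (by norm_num) hNp.le
      _ ≤ 2 ^ (2 : ℝ) * (N : ℝ) ^ (1 + 2 * s) := by
          gcongr
          · norm_num
          · linarith
      _ = _ := by
          rw [Real.rpow_add hNp, Real.rpow_one]
          norm_num
          ring
  have s5 : a ^ 2 ≤ 32 * (N : ℝ) ^ (2 * s) * D := by
    have h1 : (N : ℝ) * a ^ 2 / 2 ≤ 4 * (4 * N * (N : ℝ) ^ (2 * s) * D) := by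
      have := mul_le_mul_of_nonneg_right s4 hD0
      linarith
    have h2 : (N : ℝ) * a ^ 2 ≤ N * (32 * (N : ℝ) ^ (2 * s) * D) := by linarith
    exact le_of_mul_le_mul_left h2 hNp
  have s6 : (N : ℝ) ^ (2 * s) ≤ 2 ^ ((p + 2) * (2 * s)) * T ^ (2 * s) / (a ^ p) ^ (2 * s) := by
    have e : 2 * x = 2 ^ (p + 2) * T / a ^ p := by
      rw [hx, Real.rpow_add (by norm_num)]
      norm_num
      ring
    calc (N : ℝ) ^ (2 * s) ≤ (2 * x) ^ (2 * s) := by gcongr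
      _ = _ := by
        rw [e, Real.div_rpow (by positivity) hap.le, Real.mul_rpow (by positivity) hT0.le,
          ← Real.rpow_mul (by norm_num)]
  have hP : 0 < (a ^ p) ^ (2 * s) := by positivity
  have e3 : a ^ p = a ^ 2 * (a ^ p) ^ (2 * s) := by
    rw [← Real.rpow_mul ha.le, ← Real.rpow_natCast, ← Real.rpow_add ha]
    congr 1
    rw [hp]
    have : 1 - 2 * s ≠ 0 := by linarith
    field_simp
    push_cast
    ring
  calc a ^ p = a ^ 2 * (a ^ p) ^ (2 * s) := e3
    _ ≤ (32 * (2 ^ ((p + 2) * (2 * s)) * T ^ (2 * s) / (a ^ p) ^ (2 * s)) * D)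
        * (a ^ p) ^ (2 * s) := by
      gcongr
      refine s5.trans ?_
      gcongr
    _ = _ := by field_simp

lemma energy_summable (s : ℝ) (hs0 : 0 < s) (hs1 : s < 1/2) (u : ℤ → ℝ)
    (hu : (Function.support u).Finite) :
    Summable (fun x : ℤ × ℤ => |u x.1 - u x.2| ^ 2 * rker s (x.1 - x.2)) := by
  have hr := rker_summable s hs0 hs1
  have hr0 := rker_nonneg s hs0 hs1
  have hu2 : Summable (fun j => u j ^ 2) := by
    refine summable_of_hasFiniteSupport (hu.subset ?_)
    intro j hj
    simp only [Function.mem_support] at hj ⊢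
    intro h
    simp [h] at hj
  have hprod : Summable (fun x : ℤ × ℤ => u x.1 ^ 2 * rker s x.2) :=
    hu2.mul_of_nonneg hr (fun j => sq_nonneg _) hr0
  have h1 : Summable (fun x : ℤ × ℤ => u x.1 ^ 2 * rker s (x.1 - x.2)) := by
    have := hprod.comp_injective (i := fun x : ℤ × ℤ => (x.1, x.1 - x.2)) (by
      rintro ⟨a, b⟩ ⟨c, d⟩ h
      simp only [Prod.mk.injEq] at h ⊢
      omega)
    exact this
  have h2 : Summable (fun x : ℤ × ℤ => u x.2 ^ 2 * rker s (x.1 - x.2)) := by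
    have := hprod.comp_injective (i := fun x : ℤ × ℤ => (x.2, x.1 - x.2)) (by
      rintro ⟨a, b⟩ ⟨c, d⟩ h
      simp only [Prod.mk.injEq] at h ⊢
      omega)
    exact this
  refine Summable.of_nonneg_of_le (fun x => mul_nonneg (by positivity) (hr0 _)) (fun x => ?_)
    ((h1.add h2).mul_left 2)
  rw [← add_mul, ← mul_assoc]
  refine mul_le_mul_of_nonneg_right ?_ (hr0 _)
  rw [sq_abs]
  nlinarith [sq_nonneg (u x.1 + u x.2)]

lemma unit_sobolev (s : ℝ) (hs0 : 0 < s) (hs1 : s < 1/2) (u : ℤ → ℝ)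
    (hu : (Function.support u).Finite) :
    (∑' j : ℤ, |u j| ^ (2 / (1 - 2 * s))) ^ (1 - 2 * s) ≤
      (32 * (2 : ℝ) ^ ((2 / (1 - 2 * s) + 2) * (2 * s))) *
        ∑' j : ℤ, ∑' m : ℤ, |u j - u m| ^ 2 * rker s (j - m) := by
  obtain ⟨p, hp⟩ : ∃ p, p = 2 / (1 - 2 * s) := ⟨_, rfl⟩
  rw [← hp]
  have hp2 : 2 < p := by
    rw [hp, lt_div_iff₀ (by linarith)]; linarith
  have hr0 := rker_nonneg s hs0 hs1
  have hE := energy_summable s hs0 hs1 u hu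
  have hEj : Summable (fun j : ℤ => ∑' m : ℤ, |u j - u m| ^ 2 * rker s (j - m)) := hE.prod
  have hEm : ∀ j : ℤ, Summable (fun m : ℤ => |u j - u m| ^ 2 * rker s (j - m)) :=
    fun j => hE.prod_factor j
  have hD0 : ∀ j : ℤ, 0 ≤ ∑' m : ℤ, |u j - u m| ^ 2 * rker s (j - m) :=
    fun j => tsum_nonneg fun m => mul_nonneg (by positivity) (hr0 _)
  have hup : Summable (fun j => |u j| ^ p) := by
    refine summable_of_hasFiniteSupport (hu.subset ?_)
    intro j hj
    simp only [Function.mem_support] at hj ⊢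
    intro h
    rw [h, abs_zero, Real.zero_rpow (by linarith)] at hj
    exact hj rfl
  set T := ∑' j : ℤ, |u j| ^ p with hT
  set A : ℝ := 32 * (2 : ℝ) ^ ((p + 2) * (2 * s)) with hA
  have hA0 : 0 < A := by positivity
  have hT0 : 0 ≤ T := tsum_nonneg fun j => by positivity
  have hpt : ∀ j : ℤ, |u j| ^ p ≤
      A * T ^ (2 * s) * ∑' m : ℤ, |u j - u m| ^ 2 * rker s (j - m) := by
    intro j
    rcases eq_or_ne (u j) 0 with h0 | h0
    · have hz : |u j| ^ p = 0 := by rw [h0, abs_zero, Real.zero_rpow (by linarith)]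
      rw [hz]
      exact mul_nonneg (by positivity) (hD0 j)
    · have hinj : Function.Injective (fun k : ℕ => j + ((k : ℤ) + 1)) := by
        intro a b h
        simp only at h
        omega
      refine core s hs0 hs1 p hp |u j| T _ (fun k => u (j + ((k : ℤ) + 1)))
        (fun k => rker s ((k : ℤ) + 1)) (abs_pos.mpr h0)
        (hup.le_tsum j fun i _ => by positivity) (fun k => hr0 _) ?_ ?_ ?_
      · intro k
        have := rker_lower s hs0 hs1 (k + 1) (by omega)
        push_cast at this
        exact this
      · intro N
        have := hup.sum_le_tsum ((Finset.range N).map ⟨_, hinj⟩) (fun i _ => by positivity)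
        simpa using this
      · intro N
        have := (hEm j).sum_le_tsum ((Finset.range N).map ⟨_, hinj⟩)
          (fun i _ => mul_nonneg (by positivity) (hr0 _))
        refine le_trans ?_ this
        rw [Finset.sum_map]
        refine Finset.sum_le_sum fun k _ => ?_
        simp only [Function.Embedding.coeFn_mk]
        rw [show j - (j + ((k : ℤ) + 1)) = -((k : ℤ) + 1) by ring, rker_neg]
        refine mul_le_mul_of_nonneg_right ?_ (hr0 _)
        rw [← sq_abs (|u j| - _)]
        exact pow_le_pow_left₀ (abs_nonneg _) (abs_abs_sub_abs_le _ _) 2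
  have hsum : T ≤ A * T ^ (2 * s) * ∑' j : ℤ, ∑' m : ℤ, |u j - u m| ^ 2 * rker s (j - m) := by
    rw [← tsum_mul_left]
    exact hup.tsum_le_tsum hpt (hEj.mul_left _)
  rcases hT0.eq_or_lt with h0 | hpos
  · rw [← h0, Real.zero_rpow (by linarith)]
    exact mul_nonneg hA0.le (tsum_nonneg hD0)
  · have hX : 0 < T ^ (2 * s) := by positivity
    rw [Real.rpow_sub hpos, Real.rpow_one, div_le_iff₀ hX]
    linarith

/-- Fractional discrete Sobolev inequality. -/
theorem fractional_discrete_Sobolev (s : ℝ) (hs0 : 0 < s) (hs1 : s < 1/2) :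
    ∃ C : ℝ, 0 < C ∧ ∀ h : ℝ, 0 < h → ∀ u : ℤ → ℝ, (Function.support u).Finite →
      (h * ∑' j : ℤ, |u j| ^ (2 / (1 - 2 * s))) ^ ((1 - 2 * s) / 2) ≤
        C * (h / 2 * ∑' j : ℤ, ∑' m : ℤ,
          |u j - u m| ^ (2 : ℝ) * Ksh h s (j - m)) ^ ((1 : ℝ) / 2) := by
  obtain ⟨A, hA⟩ : ∃ A : ℝ, A = 32 * (2 : ℝ) ^ ((2 / (1 - 2 * s) + 2) * (2 * s)) := ⟨_, rfl⟩
  obtain ⟨c, hc⟩ : ∃ c : ℝ, c = (4 : ℝ) ^ s * Real.Gamma (1/2 + s) /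
    (Real.sqrt Real.pi * (Real.Gamma (1 - s) / s)) := ⟨_, rfl⟩
  have hA0 : 0 < A := by rw [hA]; positivity
  have hc0 : 0 < c := by
    have := Real.Gamma_pos_of_pos (show 0 < 1/2 + s by linarith)
    have := Real.Gamma_pos_of_pos (show 0 < 1 - s by linarith)
    have := Real.pi_pos
    rw [hc]; positivity
  refine ⟨(2 * A / c) ^ ((1 : ℝ) / 2), by positivity, fun h hh u hu => ?_⟩
  have hK : ∀ m, Ksh h s m = c / h ^ (2 * s) * rker s m := by
    intro m
    unfold Ksh rker
    rw [← hc]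
    split_ifs
    · simp
    · rw [div_mul_div_comm, mul_div_assoc]
  have hU := unit_sobolev s hs0 hs1 u hu
  rw [← hA] at hU
  have hsum : ∑' j : ℤ, ∑' m : ℤ, |u j - u m| ^ (2 : ℝ) * Ksh h s (j - m) =
      c / h ^ (2 * s) * ∑' j : ℤ, ∑' m : ℤ, |u j - u m| ^ 2 * rker s (j - m) := by
    rw [← tsum_mul_left]
    refine tsum_congr fun j => ?_
    rw [← tsum_mul_left]
    refine tsum_congr fun m => ?_
    rw [hK, Real.rpow_two]
    ring
  rw [hsum]
  set E := ∑' j : ℤ, ∑' m : ℤ, |u j - u m| ^ 2 * rker s (j - m) with hE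
  have hE0 : 0 ≤ E := tsum_nonneg fun j => tsum_nonneg fun m =>
    mul_nonneg (by positivity) (rker_nonneg s hs0 hs1 _)
  set T := ∑' j : ℤ, |u j| ^ (2 / (1 - 2 * s)) with hT
  have hT0 : 0 ≤ T := tsum_nonneg fun j => by positivity
  rw [← Real.mul_rpow (by positivity) (by positivity),
    show (1 - 2 * s) / 2 = (1 - 2 * s) * ((1 : ℝ) / 2) by ring,
    Real.rpow_mul (by positivity)]
  refine Real.rpow_le_rpow (by positivity) ?_ (by norm_num)
  rw [Real.mul_rpow hh.le hT0]
  calc h ^ (1 - 2 * s) * T ^ (1 - 2 * s) ≤ h ^ (1 - 2 * s) * (A * E) := by gcongr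
    _ = _ := by
      rw [Real.rpow_sub hh, Real.rpow_one]
      field_simp
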